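/- (Central transversal theorem) Let 0 ≤ m ≤ d and let μ_0, …, μ_m be probability measures on ℝ^d, each absolutely continuous with respect to Lebesgue measure. Then there exists an affine subspace L of ℝ^d of dimension m such that every closed halfspace H containing L satisfies μ_i(H) ≥ 1/(d−m+1) for all i = 0, …, m. -/

import Mathlib

open scoped InnerProductSpace ENNReal
open MeasureTheory

namespace CT

/-- Points of the integer grid. -/
abbrev Pt (N : ℕ) := Fin N → ℤ

/-- Combinatorial simplices: an (even, odd) edge per coordinate, plus an order. -/
abbrev Sx (N : ℕ) := (Fin N → ℤ × ℤ) × Equiv.Perm (Fin N)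

/-- Edges of the one-dimensional fence. -/
noncomputable def edges (n : ℤ) : Finset (ℤ × ℤ) :=
  (Finset.Icc (-n) n ×ˢ Finset.Icc (-n) n).filter
    (fun q => Even q.1 ∧ (q.2 = q.1 + 1 ∨ q.2 = q.1 - 1))

lemma mem_edges {n : ℤ} {q : ℤ × ℤ} : q ∈ edges n ↔
    (-n ≤ q.1 ∧ q.1 ≤ n) ∧ (-n ≤ q.2 ∧ q.2 ≤ n) ∧ Even q.1 ∧
      (q.2 = q.1 + 1 ∨ q.2 = q.1 - 1) := by
  simp [edges, and_assoc]

/-- All simplices. -/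
noncomputable def simps (N : ℕ) (n : ℤ) : Finset (Sx N) :=
  (Fintype.piFinset fun _ => edges n) ×ˢ Finset.univ

lemma mem_simps {N : ℕ} {n : ℤ} {s : Sx N} : s ∈ simps N n ↔ ∀ a, s.1 a ∈ edges n := by
  simp [simps]

/-- The `j`-th vertex. -/
def vtx {N : ℕ} (s : Sx N) (j : ℕ) : Pt N :=
  fun a => if (s.2 a : ℕ) < j then (s.1 a).2 else (s.1 a).1

/-- Negate a block. -/
def negB {N : ℕ} {κ R : Type*} [DecidableEq κ] [Neg R] (blk : Fin N → κ) (b : κ) (x : Fin N → R) :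
    Fin N → R :=
  fun a => if blk a = b then - x a else x a

lemma z2_add_self (x : ZMod 2) : x + x = 0 := CharTwo.add_self_eq_zero x

lemma sum_mid {N : ℕ} {n : ℤ} (F : (ℕ → Pt N) → ZMod 2) (j : ℕ) (hj : 0 < j) (hjN : j < N)
    (hF : ∀ v v', (∀ i, i ≠ j → v i = v' i) → F v = F v') :
    ∑ s ∈ simps N n, F (vtx s) = 0 := by
  have h1 : j - 1 < N := by omega
  set τ : Equiv.Perm (Fin N) := Equiv.swap ⟨j - 1, h1⟩ ⟨j, hjN⟩ with hτ
  refine Finset.sum_involution (fun s _ => (s.1, s.2.trans τ)) ?_ ?_ ?_ ?_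
  · intro s hs
    rw [hF (vtx s) (vtx (s.1, s.2.trans τ)) ?_, z2_add_self]
    intro i hi
    funext a
    have : ((s.2 a : ℕ) < i) ↔ ((τ (s.2 a) : ℕ) < i) := by
      rw [hτ, Equiv.swap_apply_def]
      split_ifs with h2 h3
      · rw [h2]; simp; omega
      · rw [h3]; simp; omega
      · rfl
    simp only [vtx, Equiv.trans_apply]
    exact if_congr this rfl rfl
  · intro s hs _ h
    have h2 : s.2.trans τ = s.2 := congrArg Prod.snd h
    have h3 := Equiv.congr_fun h2 (s.2.symm ⟨j, hjN⟩)
    simp [hτ] at h3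
    omega
  · intro s hs
    rw [mem_simps] at *
    exact hs
  · intro s hs
    ext1
    · rfl
    · ext a; simp [hτ]

lemma sum_zero {N : ℕ} {n : ℤ} (hn : Even n) (F : (ℕ → Pt N) → ZMod 2) (hN : 0 < N)
    (hF : ∀ v v', (∀ i, i ≠ 0 → v i = v' i) → F v = F v') :
    ∑ s ∈ simps N n, F (vtx s) = 0 := by
  let c : Sx N → Fin N := fun s => s.2.symm ⟨0, hN⟩
  refine Finset.sum_involution (fun s _ => (Function.update s.1 (c s)
    (2 * (s.1 (c s)).2 - (s.1 (c s)).1, (s.1 (c s)).2), s.2)) ?_ ?_ ?_ ?_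
  · intro s hs
    rw [hF (vtx s) (vtx (Function.update s.1 (c s)
      (2 * (s.1 (c s)).2 - (s.1 (c s)).1, (s.1 (c s)).2), s.2)) ?_, z2_add_self]
    intro i hi
    funext a
    by_cases ha : a = c s
    · subst ha
      have : 0 < i := by omega
      simp [vtx, c, this]
    · simp [vtx, ha]
  · intro s hs _ h
    have h2 := congrFun (congrArg Prod.fst h) (c s)
    simp at h2
    have h3 := congrArg Prod.fst h2
    rw [mem_simps] at hs
    have := (mem_edges.1 (hs (c s))).2.2.2
    simp at h3
    omega
  · intro s hs
    rw [mem_simps] at *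
    intro a
    by_cases ha : a = c s
    · rw [ha]
      have := mem_edges.1 (hs (c s))
      simp only [Function.update_self, mem_edges]
      obtain ⟨q, hq⟩ := hn
      obtain ⟨h1, h2, ⟨r, hr⟩, h4⟩ := this
      refine ⟨by omega, by omega, ⟨(s.1 (c s)).2 - r, by omega⟩, by omega⟩
    · simpa [ha] using hs a
  · intro s hs
    ext1
    · simp [c]
    · rfl

lemma sum_last {N : ℕ} {n : ℤ} (hn : Even n) (hn0 : 0 < n)
    {κ : Type*} [DecidableEq κ] (blk : Fin N → κ)
    (F : (ℕ → Pt N) → ZMod 2) (hN : 0 < N)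
    (hF : ∀ v v', (∀ i, i < N → v i = v' i) → F v = F v')
    (hinv : ∀ v b a, blk a = b → (∀ i, i < N → |v i a| = n) →
      F (fun i => negB blk b (v i)) = F v) :
    ∑ s ∈ simps N n, F (vtx s) = 0 := by
  let c : Sx N → Fin N := fun s => s.2.symm ⟨N - 1, by omega⟩
  let g : Sx N → Sx N := fun s => if |(s.1 (c s)).1| = n then
      (fun a => if blk a = blk (c s) then (-(s.1 a).1, -(s.1 a).2) else s.1 a, s.2)
    else (Function.update s.1 (c s)
    ((s.1 (c s)).1, 2 * (s.1 (c s)).1 - (s.1 (c s)).2), s.2)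
  have hg2 : ∀ s, (g s).2 = s.2 := by
    intro s; simp only [g]; split_ifs <;> rfl
  have hc : ∀ s, c (g s) = c s := by
    intro s; simp only [c, hg2]
  have hlast : ∀ s : Sx N, ∀ i < N, ¬ ((s.2 (c s) : ℕ) < i) := by
    intro s i hi; simp [c]; omega
  refine Finset.sum_involution (fun s _ => g s) ?_ ?_ ?_ ?_
  · intro s hs
    by_cases hb : |(s.1 (c s)).1| = n
    · have hg : g s = (fun a => if blk a = blk (c s) then (-(s.1 a).1, -(s.1 a).2)
        else s.1 a, s.2) := by simp only [g]; rw [if_pos hb]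
      have e : vtx (g s) = fun i => negB blk (blk (c s)) (vtx s i) := by
        funext i a
        rw [hg]
        simp only [vtx, negB]
        split_ifs <;> rfl
      rw [e, hinv (vtx s) _ (c s) rfl, z2_add_self]
      intro i hi
      simp only [vtx]
      rw [if_neg (hlast s i hi), hb]
    · have hg : g s = (Function.update s.1 (c s)
        ((s.1 (c s)).1, 2 * (s.1 (c s)).1 - (s.1 (c s)).2), s.2) := by
        simp only [g]; rw [if_neg hb]
      rw [hF (vtx s) (vtx (g s)) ?_, z2_add_self]
      intro i hi
      rw [hg]
      funext a
      by_cases ha : a = c s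
      · subst ha
        simp only [vtx]
        rw [if_neg (hlast s i hi), if_neg (hlast s i hi)]
        simp
      · simp [vtx, ha]
  · intro s hs _ h
    have h2 := congrFun (congrArg Prod.fst h) (c s)
    rw [mem_simps] at hs
    have h4 := (mem_edges.1 (hs (c s)))
    by_cases hb : |(s.1 (c s)).1| = n
    · simp only [g] at h2
      rw [if_pos hb] at h2
      have h3 := congrArg Prod.fst h2
      simp at h3
      have h5 : (s.1 (c s)).1 = 0 := by omega
      rw [h5] at hb
      simp at hb
      omega
    · simp only [g] at h2
      rw [if_neg hb] at h2
      have h3 := congrArg Prod.snd h2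
      simp at h3
      omega
  · intro s hs
    rw [mem_simps] at *
    intro a
    have h4 := mem_edges.1 (hs a)
    by_cases hb : |(s.1 (c s)).1| = n
    · simp only [g]
      rw [if_pos hb]
      try simp only
      split_ifs
      · rw [mem_edges]
        obtain ⟨h1, h2, h3, h4⟩ := h4
        refine ⟨by simp; omega, by simp; omega, by simpa using h3, by simp; omega⟩
      · exact hs a
    · simp only [g]
      rw [if_neg hb]
      by_cases ha : a = c s
      · subst ha
        simp only [Function.update_self, mem_edges]
        obtain ⟨h1, h2, h3, h4⟩ := h4
        have : (s.1 (c s)).1 ≠ n := fun h => hb (by rw [h]; exact abs_of_pos hn0)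
        have : (s.1 (c s)).1 ≠ -n := fun h => hb (by rw [h, abs_neg]; exact abs_of_pos hn0)
        exact ⟨by omega, by omega, h3, by omega⟩
      · simpa [ha] using hs a
  · intro s hs
    ext1
    · funext a
      by_cases hb : |(s.1 (c s)).1| = n
      · have hg : g s = (fun a => if blk a = blk (c s) then (-(s.1 a).1, -(s.1 a).2)
          else s.1 a, s.2) := by simp only [g]; rw [if_pos hb]
        have hb' : |((g s).1 (c (g s))).1| = n := by
          rw [hc, hg]; simpa using hb
        have : g (g s) = (fun a => if blk a = blk (c s) then (-((g s).1 a).1, -((g s).1 a).2)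
          else (g s).1 a, s.2) := by
          conv_lhs => simp only [g]
          rw [if_pos hb', hc, hg2]
        rw [this, hg]
        by_cases h : blk a = blk (c s) <;> simp [h]
      · have hg : g s = (Function.update s.1 (c s)
          ((s.1 (c s)).1, 2 * (s.1 (c s)).1 - (s.1 (c s)).2), s.2) := by
          simp only [g]; rw [if_neg hb]
        have hb' : ¬ |((g s).1 (c (g s))).1| = n := by
          rw [hc, hg]; simpa using hb
        have : g (g s) = (Function.update (g s).1 (c s)
          (((g s).1 (c s)).1, 2 * ((g s).1 (c s)).1 - ((g s).1 (c s)).2), s.2) := by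
          conv_lhs => simp only [g]
          rw [if_neg hb', hc, hg2]
        rw [this, hg]
        by_cases h : a = c s
        · subst h; simp
        · simp [h]
    · simp [hg2]

end CT

namespace CT

/-- The coboundary of a label on an edge. -/
def w {N : ℕ} (L : Pt N → ZMod 2) (x y : Pt N) : ZMod 2 := L x + L y

lemma w_tri {N : ℕ} (L : Pt N → ZMod 2) (x y z : Pt N) : w L y z = w L x z + w L x y := by
  unfold w
  have := z2_add_self (L x)
  linear_combination this.symm

/-- Lower sums vanish. -/
lemma sum_low {N : ℕ} {n : ℤ} (hn : Even n) (L : ℕ → Pt N → ZMod 2) (i : ℕ) (hi : i < N)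
    (F : (ℕ → Pt N) → ZMod 2) (hF : ∀ v v', (∀ j, i < j → v j = v' j) → F v = F v') :
    ∑ s ∈ simps N n, (∏ r ∈ Finset.range i, w (L r) (vtx s r) (vtx s (r + 1))) * F (vtx s) = 0 := by
  induction i generalizing F with
  | zero =>
    simp only [Finset.range_zero, Finset.prod_empty, one_mul]
    exact sum_zero hn F hi fun v v' h => hF v v' fun j hj => h j (by omega)
  | succ i ih =>
    have h1 := ih (by omega) (fun v => L i (v (i + 1)) * F v) (by
      intro v v' h
      try simp only
      rw [h (i + 1) (by omega), hF v v' fun j hj => h j (by omega)])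
    have h2 := sum_mid (n := n) (fun v => (∏ r ∈ Finset.range i, w (L r) (v r) (v (r + 1))) *
      L i (v i) * F v) (i + 1) (by omega) hi (by
      intro v v' h
      try simp only
      rw [h i (by omega), hF v v' fun j hj => h j (by omega)]
      congr 2
      refine Finset.prod_congr rfl fun r hr => ?_
      have := Finset.mem_range.1 hr
      rw [h r (by omega), h (r + 1) (by omega)])
    have h3 := congrArg₂ (· + ·) h1 h2
    simp only [← Finset.sum_add_distrib, add_zero] at h3
    rw [← h3]
    refine Finset.sum_congr rfl fun s _ => ?_
    rw [Finset.prod_range_succ]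
    unfold w
    ring

/-- Upper sums vanish for invariant functions. -/
lemma sum_high {N : ℕ} {n : ℤ} (hn : Even n) (hn0 : 0 < n)
    {κ : Type*} [DecidableEq κ] (blk : Fin N → κ) (T : ℕ → κ → ZMod 2)
    (L : ℕ → Pt N → ZMod 2)
    (hL : ∀ r b x a, blk a = b → |x a| = n → L r (negB blk b x) = L r x + T r b)
    (t i : ℕ) (hi : i + 1 + t = N)
    (F : (ℕ → Pt N) → ZMod 2) (hF : ∀ v v', (∀ j, j ≤ i → v j = v' j) → F v = F v')
    (hinv : ∀ v b a, blk a = b → (∀ j, j ≤ i → |v j a| = n) →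
      F (fun j => negB blk b (v j)) = F v) :
    ∑ s ∈ simps N n, F (vtx s) *
      (∏ r ∈ Finset.Ico (i + 1) N, w (L r) (vtx s r) (vtx s (r + 1))) = 0 := by
  induction t generalizing i F with
  | zero =>
    have : i + 1 = N := by omega
    subst this
    simp only [Finset.Ico_self, Finset.prod_empty, mul_one]
    exact sum_last hn hn0 blk F (by omega) (fun v v' h => hF v v' fun j hj => h j (by omega))
      (fun v b a hb h => hinv v b a hb fun j hj => h j (by omega))
  | succ t ih =>
    have hw : ∀ r b x y a, blk a = b → |x a| = n → |y a| = n →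
        w (L r) (negB blk b x) (negB blk b y) = w (L r) x y := by
      intro r b x y a hb hx hy
      unfold w
      rw [hL r b x a hb hx, hL r b y a hb hy]
      linear_combination z2_add_self (T r b)
    have h1 := ih (i + 1) (by omega) (fun v => F v * w (L (i + 1)) (v i) (v (i + 1))) (by
      intro v v' h
      try simp only
      rw [h i (by omega), h (i + 1) (by omega), hF v v' fun j hj => h j (by omega)]) (by
      intro v b a hb h
      try simp only
      rw [hinv v b a hb fun j hj => h j (by omega),
        hw _ _ _ _ a hb (h i (by omega)) (h (i + 1) (by omega))])
    have h2 := sum_mid (n := n) (fun v => F v * w (L (i + 1)) (v i) (v (i + 2)) *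
      ∏ r ∈ Finset.Ico (i + 2) N, w (L r) (v r) (v (r + 1))) (i + 1) (by omega) (by omega) (by
      intro v v' h
      try simp only
      rw [h i (by omega), h (i + 2) (by omega), hF v v' fun j hj => h j (by omega)]
      congr 1
      refine Finset.prod_congr rfl fun r hr => ?_
      have := Finset.mem_Ico.1 hr
      rw [h r (by omega), h (r + 1) (by omega)])
    have h3 := congrArg₂ (· + ·) h1 h2
    simp only [← Finset.sum_add_distrib, add_zero] at h3
    rw [← h3]
    refine Finset.sum_congr rfl fun s _ => ?_
    rw [Finset.prod_eq_prod_Ico_succ_bot (show i + 1 < N by omega),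
      w_tri (L (i + 1)) (vtx s i) (vtx s (i + 1)) (vtx s (i + 1 + 1))]
    ring

/-- The parity count. -/
noncomputable def cnt (N : ℕ) (n : ℤ) (L : ℕ → Pt N → ZMod 2) : ZMod 2 :=
  ∑ s ∈ simps N n, ∏ r ∈ Finset.range N, w (L r) (vtx s r) (vtx s (r + 1))

lemma cnt_update {N : ℕ} {n : ℤ} (hn : Even n) (hn0 : 0 < n)
    {κ : Type*} [DecidableEq κ] (blk : Fin N → κ) (T : ℕ → κ → ZMod 2)
    (L : ℕ → Pt N → ZMod 2)
    (hL : ∀ r b x a, blk a = b → |x a| = n → L r (negB blk b x) = L r x + T r b)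
    (i : ℕ) (hi : i < N) (l : Pt N → ZMod 2)
    (hl : ∀ b x a, blk a = b → |x a| = n → l (negB blk b x) = l x + T i b) :
    cnt N n (Function.update L i l) = cnt N n L := by
  have key : ∀ M : ℕ → Pt N → ZMod 2, ∀ s : Sx N,
      ∏ r ∈ Finset.range N, w (M r) (vtx s r) (vtx s (r + 1)) =
      (∏ r ∈ Finset.range i, w (M r) (vtx s r) (vtx s (r + 1))) *
        w (M i) (vtx s i) (vtx s (i + 1)) *
        ∏ r ∈ Finset.Ico (i + 1) N, w (M r) (vtx s r) (vtx s (r + 1)) := by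
    intro M s
    rw [← Finset.prod_range_succ, Finset.prod_range_mul_prod_Ico _ (by omega)]
  set h : Pt N → ZMod 2 := fun x => L i x + l x with hh
  have h1 := sum_low hn L i hi (fun v => h (v (i + 1)) *
    ∏ r ∈ Finset.Ico (i + 1) N, w (L r) (v r) (v (r + 1))) (by
      intro v v' h
      try simp only
      rw [h (i + 1) (by omega)]
      congr 1
      refine Finset.prod_congr rfl fun r hr => ?_
      have := Finset.mem_Ico.1 hr
      rw [h r (by omega), h (r + 1) (by omega)])
  have h2 := sum_high hn hn0 blk T L hL (N - i - 1) i (by omega)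
    (fun v => (∏ r ∈ Finset.range i, w (L r) (v r) (v (r + 1))) * h (v i)) (by
      intro v v' h
      try simp only
      rw [h i (by omega)]
      congr 1
      refine Finset.prod_congr rfl fun r hr => ?_
      have := Finset.mem_range.1 hr
      rw [h r (by omega), h (r + 1) (by omega)]) (by
      intro v b a hb hv
      try simp only
      congr 1
      · refine Finset.prod_congr rfl fun r hr => ?_
        have := Finset.mem_range.1 hr
        unfold w
        rw [hL r b _ a hb (hv r (by omega)), hL r b _ a hb (hv (r + 1) (by omega))]
        linear_combination z2_add_self (T r b)
      · simp only [hh]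
        rw [hL i b _ a hb (hv i le_rfl), hl b _ a hb (hv i le_rfl)]
        linear_combination z2_add_self (T i b))
  have h3 : cnt N n (Function.update L i l) + cnt N n L = 0 := by
    have h4 := congrArg₂ (· + ·) h1 h2
    simp only [← Finset.sum_add_distrib, add_zero] at h4
    unfold cnt
    rw [← Finset.sum_add_distrib, ← h4]
    refine Finset.sum_congr rfl fun s _ => ?_
    rw [key, key]
    have e1 : ∏ r ∈ Finset.range i, w (Function.update L i l r) (vtx s r) (vtx s (r + 1)) =
        ∏ r ∈ Finset.range i, w (L r) (vtx s r) (vtx s (r + 1)) := by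
      refine Finset.prod_congr rfl fun r hr => ?_
      have := Finset.mem_range.1 hr
      rw [Function.update_of_ne (by omega)]
    have e2 : ∏ r ∈ Finset.Ico (i + 1) N, w (Function.update L i l r) (vtx s r) (vtx s (r + 1)) =
        ∏ r ∈ Finset.Ico (i + 1) N, w (L r) (vtx s r) (vtx s (r + 1)) := by
      refine Finset.prod_congr rfl fun r hr => ?_
      have := Finset.mem_Ico.1 hr
      rw [Function.update_of_ne (by omega)]
    rw [e1, e2, Function.update_self]
    simp only [hh, w]
    ring
  have := z2_add_self (cnt N n L)
  linear_combination h3 - this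

lemma cnt_eq {N : ℕ} {n : ℤ} (hn : Even n) (hn0 : 0 < n)
    {κ : Type*} [DecidableEq κ] (blk : Fin N → κ) (T : ℕ → κ → ZMod 2)
    (L L' : ℕ → Pt N → ZMod 2)
    (hL : ∀ r b x a, blk a = b → |x a| = n → L r (negB blk b x) = L r x + T r b)
    (hL' : ∀ r b x a, blk a = b → |x a| = n → L' r (negB blk b x) = L' r x + T r b) :
    cnt N n L = cnt N n L' := by
  have : ∀ i ≤ N, cnt N n (fun r => if r < i then L' r else L r) = cnt N n L := by
    intro i
    induction i with
    | zero => intro _; simp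
    | succ i ih =>
      intro hi
      rw [← ih (by omega), ← cnt_update hn hn0 blk T (fun r => if r < i then L' r else L r) ?_ i
        (by omega) (L' i) (hL' i)]
      · congr 1
        funext r
        by_cases h : r = i
        · subst h; simp
        · have : r < i + 1 ↔ r < i := by omega
          simp [h, this]
      · intro r b x a hb hx
        try simp only
        split_ifs
        · exact hL' r b x a hb hx
        · exact hL r b x a hb hx
  rw [← this N le_rfl]
  unfold cnt
  refine Finset.sum_congr rfl fun s _ => Finset.prod_congr rfl fun r hr => ?_
  simp [Finset.mem_range.1 hr]

end CT

namespace CT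

open Classical in
/-- The reference boundary sign of block `b`. -/
noncomputable def tB {N : ℕ} (n : ℤ) (blk : Fin N → ℕ) (b : ℕ) (x : Pt N) : ZMod 2 :=
  if h : ∃ c, blk c = b ∧ |x c| = n then (if x h.choose < 0 then 1 else 0) else 0

lemma choose_congr {α : Type*} {P Q : α → Prop} (e : P = Q) (h : ∃ c, P c) (h' : ∃ c, Q c) :
    h.choose = h'.choose := by
  subst e; rfl

lemma negB_abs {N : ℕ} (blk : Fin N → ℕ) (b : ℕ) (x : Pt N) (c : Fin N) :
    |negB blk b x c| = |x c| := by
  unfold negB; split_ifs <;> simp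

lemma tB_neg_ne {N : ℕ} (n : ℤ) (blk : Fin N → ℕ) (b b' : ℕ) (h : b' ≠ b) (x : Pt N) :
    tB n blk b' (negB blk b x) = tB n blk b' x := by
  have e : (fun c => blk c = b' ∧ |negB blk b x c| = n) = (fun c => blk c = b' ∧ |x c| = n) := by
    funext c; rw [negB_abs]
  by_cases h1 : ∃ c, blk c = b' ∧ |x c| = n
  · have h2 : ∃ c, blk c = b' ∧ |negB blk b x c| = n := by simpa only [negB_abs] using h1
    unfold tB
    rw [dif_pos h1, dif_pos h2, choose_congr e h2 h1]
    have : blk h1.choose ≠ b := by rw [h1.choose_spec.1]; exact h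
    simp [negB, this]
  · have h2 : ¬ ∃ c, blk c = b' ∧ |negB blk b x c| = n := by simpa only [negB_abs] using h1
    unfold tB
    rw [dif_neg h1, dif_neg h2]

lemma tB_neg_eq {N : ℕ} (n : ℤ) (hn0 : 0 < n) (blk : Fin N → ℕ) (b : ℕ) (x : Pt N)
    (h1 : ∃ c, blk c = b ∧ |x c| = n) :
    tB n blk b (negB blk b x) = tB n blk b x + 1 := by
  have e : (fun c => blk c = b ∧ |negB blk b x c| = n) = (fun c => blk c = b ∧ |x c| = n) := by
    funext c; rw [negB_abs]
  have h2 : ∃ c, blk c = b ∧ |negB blk b x c| = n := by simpa only [negB_abs] using h1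
  unfold tB
  rw [dif_pos h1, dif_pos h2, choose_congr e h2 h1]
  have h3 := h1.choose_spec
  have h4 : x h1.choose ≠ 0 := by
    intro h; rw [h] at h3; simp at h3; omega
  have h5 : negB blk b x h1.choose = - x h1.choose := by simp [negB, h3.1]
  rw [h5]
  by_cases h6 : x h1.choose < 0
  · rw [if_pos h6, if_neg (by omega)]; decide
  · rw [if_neg h6, if_pos (by omega)]; decide

lemma tB_int {N : ℕ} (n : ℤ) (blk : Fin N → ℕ) (b : ℕ) (x : Pt N)
    (h : ∀ c, blk c = b → |x c| ≠ n) : tB n blk b x = 0 := by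
  unfold tB
  rw [dif_neg]
  rintro ⟨c, h1, h2⟩
  exact h c h1 h2

/-- Reference sign of coordinate `a`. -/
noncomputable def sg {N : ℕ} (n : ℤ) (blk : Fin N → ℕ) (a : Fin N) (x : Pt N) : ZMod 2 :=
  if x a < 0 then 1 else if 0 < x a then 0 else tB n blk (blk a) x

/-- The reference labelling. -/
noncomputable def tst {N : ℕ} (n : ℤ) (blk : Fin N → ℕ) (T : Fin N → ℕ → ZMod 2)
    (a : Fin N) (x : Pt N) : ZMod 2 :=
  sg n blk a x + ∑ b ∈ Finset.range (blk a), T a b * tB n blk b x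

/-- Admissible labelling. -/
def Adm {N : ℕ} (n : ℤ) (blk : Fin N → ℕ) (T : Fin N → ℕ → ZMod 2)
    (L : Fin N → Pt N → ZMod 2) : Prop :=
  ∀ r b x a, blk a = b → |x a| = n → L r (negB blk b x) = L r x + T r b

lemma tst_adm {N : ℕ} (n : ℤ) (hn0 : 0 < n) (blk : Fin N → ℕ) (T : Fin N → ℕ → ZMod 2)
    (hT1 : ∀ a, T a (blk a) = 1) (hT0 : ∀ a b, blk a < b → T a b = 0) :
    Adm n blk T (tst n blk T) := by
  intro a b x c hc hx
  have hex : ∃ c, blk c = b ∧ |x c| = n := ⟨c, hc, hx⟩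
  unfold tst
  have hsum : ∀ s : Finset ℕ, b ∉ s → ∑ b' ∈ s, T a b' * tB n blk b' (negB blk b x)
      = ∑ b' ∈ s, T a b' * tB n blk b' x := by
    intro s hs
    refine Finset.sum_congr rfl fun b' hb' => ?_
    rw [tB_neg_ne]
    rintro rfl; exact hs hb'
  by_cases hb : blk a = b
  · rw [hsum _ (by simp [hb])]
    subst hb
    rw [hT1]
    have : sg n blk a (negB blk (blk a) x) = sg n blk a x + 1 := by
      unfold sg
      rw [tB_neg_eq n hn0 blk _ x hex]
      have h5 : negB blk (blk a) x a = - x a := by simp [negB]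
      rw [h5]
      rcases lt_trichotomy (x a) 0 with h | h | h
      · rw [if_pos h, if_neg (by omega), if_pos (by omega)]; decide
      · simp [h]
      · rw [if_neg (by omega : ¬ x a < 0), if_pos h, if_pos (by omega)]; decide
    rw [this]; ring
  · have h1 : sg n blk a (negB blk b x) = sg n blk a x := by
      unfold sg
      rw [tB_neg_ne n blk b _ hb]
      simp [negB, hb]
    rw [h1]
    by_cases hlt : b < blk a
    · rw [← Finset.add_sum_erase _ _ (Finset.mem_range.2 hlt),
        ← Finset.add_sum_erase (Finset.range (blk a)) (fun b => T a b * tB n blk b x)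
          (Finset.mem_range.2 hlt), hsum _ (by simp), tB_neg_eq n hn0 blk _ x hex]
      ring
    · rw [hsum _ (by simpa using hlt), hT0 a b (by omega)]
      ring

/-- Extend a labelling to natural indices. -/
def ext {N : ℕ} {α : Type*} [Zero α] (L : Fin N → α) (r : ℕ) : α :=
  if h : r < N then L ⟨r, h⟩ else 0

lemma ext_fin {N : ℕ} {α : Type*} [Zero α] (L : Fin N → α) (r : Fin N) : ext L r = L r := by
  simp [ext]

lemma cnt_tst {N : ℕ} (n : ℤ) (hn : Even n) (hn0 : 0 < n) (blk : Fin N → ℕ)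
    (T : Fin N → ℕ → ZMod 2) : cnt N n (ext (tst n blk T)) = 1 := by
  have hn2 : 2 ≤ n := by obtain ⟨q, hq⟩ := hn; omega
  set s0 : Sx N := (fun _ => (0, -1), Equiv.refl _) with hs0
  have hpure : ∀ a x, (∀ c, |x c| < n) → tst n blk T a x = if x a < 0 then 1 else 0 := by
    intro a x hx
    have : ∀ b, tB n blk b x = 0 := fun b => tB_int n blk b x fun c _ => (hx c).ne
    unfold tst sg
    simp [this]
  unfold cnt
  rw [Finset.sum_eq_single s0]
  · refine Finset.prod_eq_one fun r hr => ?_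
    have hr := Finset.mem_range.1 hr
    have hb : ∀ j c, |vtx s0 j c| < n := by
      intro j c
      simp only [vtx, hs0]
      split_ifs <;> simp <;> omega
    have := ext_fin (tst n blk T) ⟨r, hr⟩
    simp only at this
    unfold w
    rw [this, hpure _ _ (hb _), hpure _ _ (hb _)]
    simp [vtx, hs0]
  · intro s hs hne
    by_contra hprod
    apply hne
    replace hprod := Finset.prod_ne_zero_iff.1 hprod
    rw [mem_simps] at hs
    have hw : ∀ a : Fin N, tst n blk T a (vtx s a) ≠ tst n blk T a (vtx s (a + 1)) := by
      intro a h
      apply hprod a (Finset.mem_range.2 a.2)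
      rw [ext_fin]; unfold w; rw [h, z2_add_self]
    have h_int : ∀ b, ∀ c, blk c = b → ∀ j, |vtx s j c| ≠ n := by
      intro b
      induction b using Nat.strong_induction_on with
      | _ b ih =>
        intro c hc j hj
        apply hw c
        have hE := mem_edges.1 (hs c)
        have he : (s.1 c).1 = n ∨ (s.1 c).1 = -n := by
          obtain ⟨q, hq⟩ := hn
          obtain ⟨h1, h2, ⟨r, hr⟩, h4⟩ := hE
          simp only [vtx] at hj
          rcases abs_eq hn0.le |>.1 hj with h | h <;> split_ifs at h <;> omega
        have hsum : ∀ i, ∑ b ∈ Finset.range (blk c), T c b * tB n blk b (vtx s i) = 0 := by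
          intro i
          refine Finset.sum_eq_zero fun b' hb' => ?_
          rw [tB_int, mul_zero]
          intro c' hc'
          exact ih b' (by have := Finset.mem_range.1 hb'; omega) c' hc' i
        unfold tst
        rw [hsum, hsum]
        unfold sg
        have hv : ∀ i, vtx s i c = (s.1 c).1 ∨ vtx s i c = (s.1 c).2 := by
          intro i; simp only [vtx]; split_ifs <;> simp
        have hv1 := hv c
        have hv2 := hv (c + 1)
        rcases he with he | he
        · have p1 : 0 < vtx s c c := by omega
          have p2 : 0 < vtx s (c + 1) c := by omega
          rw [if_neg (by omega), if_pos p1, if_neg (by omega), if_pos p2]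
        · rw [if_pos (by omega), if_pos (by omega)]
    have hlt : ∀ j c, |vtx s j c| < n := by
      intro j c
      refine lt_of_le_of_ne ?_ (h_int _ c rfl j)
      have hE := mem_edges.1 (hs c)
      rw [abs_le]
      simp only [vtx]; split_ifs <;> omega
    have key : ∀ a, s.2 a = a ∧ s.1 a = (0, -1) := by
      intro a
      have h := hw a
      rw [hpure _ _ (hlt _), hpure _ _ (hlt _)] at h
      obtain ⟨h1, h2, ⟨r, hr⟩, h4⟩ := mem_edges.1 (hs a)
      have hu : ∀ j, (s.2 a : ℕ) < j → vtx s j a = (s.1 a).2 := fun j hj => if_pos hj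
      have hl : ∀ j, ¬ (s.2 a : ℕ) < j → vtx s j a = (s.1 a).1 := fun j hj => if_neg hj
      by_cases p1 : (s.2 a : ℕ) < a
      · rw [hu _ p1, hu (a + 1) (by omega)] at h; exact absurd rfl h
      by_cases p2 : (s.2 a : ℕ) < a + 1
      · rw [hl _ p1, hu _ p2] at h
        refine ⟨Fin.ext (by omega), ?_⟩
        have : (s.1 a).1 = 0 ∧ (s.1 a).2 = -1 := by
          by_cases q1 : (s.1 a).1 < 0 <;> by_cases q2 : (s.1 a).2 < 0
          · simp [q1, q2] at h
          · omega
          · omega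
          · simp [q1, q2] at h
        exact Prod.ext this.1 this.2
      · rw [hl _ p1, hl _ p2] at h; exact absurd rfl h
    refine Prod.ext (funext fun a => (key a).2) ?_
    ext a
    rw [(key a).1]; rfl
  · intro h
    exfalso; apply h
    rw [mem_simps]
    intro a
    rw [mem_edges]
    simp only [hs0]
    refine ⟨by omega, by omega, by simp, by omega⟩

theorem comb {N : ℕ} (n : ℤ) (hn : Even n) (hn0 : 0 < n) (blk : Fin N → ℕ)
    (T : Fin N → ℕ → ZMod 2)
    (hT1 : ∀ a, T a (blk a) = 1) (hT0 : ∀ a b, blk a < b → T a b = 0)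
    (L : Fin N → Pt N → ZMod 2) (hL : Adm n blk T L) :
    ∃ s ∈ simps N n, ∀ a : Fin N, L a (vtx s a) ≠ L a (vtx s (a + 1)) := by
  have hext : ∀ L : Fin N → Pt N → ZMod 2, Adm n blk T L → ∀ r b x a, blk a = b → |x a| = n →
      ext L r (negB blk b x) = ext L r x + ext T r b := by
    intro L hL r b x a hb hx
    unfold ext
    split_ifs with h
    · exact hL _ b x a hb hx
    · simp
  have h1 := cnt_eq hn hn0 blk (ext T) (ext L) (ext (tst n blk T)) (hext L hL)
    (hext _ (tst_adm n hn0 blk T hT1 hT0))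
  rw [cnt_tst n hn hn0] at h1
  have h2 : cnt N n (ext L) ≠ 0 := by rw [h1]; decide
  obtain ⟨s, hs, h3⟩ := Finset.exists_ne_zero_of_sum_ne_zero h2
  refine ⟨s, hs, fun a h => ?_⟩
  rw [Finset.prod_ne_zero_iff] at h3
  apply h3 a (Finset.mem_range.2 a.2)
  rw [ext_fin]; unfold w; rw [h, z2_add_self]

end CT

namespace CT

open Filter Topology

lemma z2_cases (t : ZMod 2) : t = 0 ∨ t = 1 := by
  revert t; decide

lemma negB_div {N : ℕ} (blk : Fin N → ℕ) (b : ℕ) (z : Pt N) (n : ℝ) :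
    (fun i => ((negB blk b z i : ℤ) : ℝ) / n) = negB blk b (fun i => (z i : ℝ) / n) := by
  funext i
  unfold negB
  split_ifs
  · push_cast; ring
  · rfl

lemma cont_step {N : ℕ} (blk : Fin N → ℕ) (T : Fin N → ℕ → ZMod 2)
    (hT1 : ∀ a, T a (blk a) = 1) (hT0 : ∀ a b, blk a < b → T a b = 0)
    (F : Fin N → (Fin N → ℝ) → ℝ)
    (hsym : ∀ a b x c, (∀ i, |x i| ≤ 1) → blk c = b → |x c| = 1 →
      (T a b = 1 → F a (negB blk b x) = - F a x) ∧ (T a b = 0 → F a (negB blk b x) = F a x))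
    (n : ℤ) (hn : Even n) (hn0 : 0 < n) :
    ∃ y : ℕ → Fin N → ℝ, (∀ j i, |y j i| ≤ 1) ∧ (∀ j i, |y j i - y 0 i| ≤ 1 / n) ∧
      ∀ a : Fin N, F a (y a) * F a (y (a + 1)) ≤ 0 := by
  classical
  have hnR : (0 : ℝ) < n := by exact_mod_cast hn0
  let D : Pt N → Fin N → ℝ := fun z i => (z i : ℝ) / n
  let L : Fin N → Pt N → ZMod 2 := fun a z =>
    if ∀ i, |z i| ≤ n then
      (if 0 < F a (D z) then 0 else if F a (D z) < 0 then 1 else tst n blk T a z)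
    else tst n blk T a z
  have hD : ∀ z : Pt N, (∀ i, |z i| ≤ n) → ∀ i, |D z i| ≤ 1 := by
    intro z hz i
    simp only [D]
    rw [abs_div, abs_of_pos hnR, div_le_one hnR]
    exact_mod_cast hz i
  have hL : Adm n blk T L := by
    intro a b z c hc hz
    have ht := tst_adm n hn0 blk T hT1 hT0 a b z c hc hz
    have hbox : (∀ i, |negB blk b z i| ≤ n) ↔ ∀ i, |z i| ≤ n := by
      simp only [negB_abs]
    simp only [L, hbox]
    by_cases hb : ∀ i, |z i| ≤ n
    · rw [if_pos hb, if_pos hb]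
      have hs := hsym a b (D z) c (hD z hb) hc (by
        simp only [D]
        rw [abs_div, abs_of_pos hnR, div_eq_one_iff_eq hnR.ne']
        exact_mod_cast hz)
      have e : D (negB blk b z) = negB blk b (D z) := negB_div blk b z n
      rw [e]
      rcases z2_cases (T a b) with hT | hT
      · rw [hs.2 hT, ht, hT]; simp
      · rw [hs.1 hT, ht, hT]
        rcases lt_trichotomy (F a (D z)) 0 with h | h | h
        · rw [if_pos (by linarith), if_neg (by linarith), if_pos h]; decide
        · simp [h]
        · rw [if_neg (by linarith), if_pos (by linarith), if_pos h]; decide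
    · rw [if_neg hb, if_neg hb, ht]
  obtain ⟨s, hs, hne⟩ := comb n hn hn0 blk T hT1 hT0 L hL
  rw [mem_simps] at hs
  have hbox : ∀ j i, |vtx s j i| ≤ n := by
    intro j i
    have := mem_edges.1 (hs i)
    rw [abs_le]
    simp only [vtx]; split_ifs <;> omega
  refine ⟨fun j => D (vtx s j), fun j => hD _ (hbox j), ?_, ?_⟩
  · intro j i
    have h1 : |vtx s j i - vtx s 0 i| ≤ 1 := by
      have := mem_edges.1 (hs i)
      rw [abs_le]
      simp only [vtx]; split_ifs <;> omega
    have h2 : D (vtx s j) i - D (vtx s 0) i = ((vtx s j i - vtx s 0 i : ℤ) : ℝ) / n := by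
      simp only [D]; push_cast; ring
    rw [h2, abs_div, abs_of_pos hnR]
    gcongr
    exact_mod_cast h1
  · intro a
    by_contra hpos
    push Not at hpos
    apply hne a
    simp only [L]
    rw [if_pos (hbox _), if_pos (hbox _)]
    rcases pos_and_pos_or_neg_and_neg_of_mul_pos hpos with ⟨h1, h2⟩ | ⟨h1, h2⟩
    · rw [if_pos h1, if_pos h2]
    · rw [if_neg (by linarith), if_pos h1, if_neg (by linarith), if_pos h2]

theorem cont {N : ℕ} (blk : Fin N → ℕ) (T : Fin N → ℕ → ZMod 2)
    (hT1 : ∀ a, T a (blk a) = 1) (hT0 : ∀ a b, blk a < b → T a b = 0)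
    (F : Fin N → (Fin N → ℝ) → ℝ) (hF : ∀ a, Continuous (F a))
    (hsym : ∀ a b x c, (∀ i, |x i| ≤ 1) → blk c = b → |x c| = 1 →
      (T a b = 1 → F a (negB blk b x) = - F a x) ∧ (T a b = 0 → F a (negB blk b x) = F a x)) :
    ∃ x : Fin N → ℝ, ∀ a, F a x = 0 := by
  have hstep := fun q : ℕ => cont_step blk T hT1 hT0 F hsym (2 * (q + 1)) (by simp) (by omega)
  choose y hy1 hy2 hy3 using hstep
  have hcomp : IsCompact (Set.pi Set.univ fun _ : Fin N => Set.Icc (-1 : ℝ) 1) :=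
    isCompact_univ_pi fun _ => isCompact_Icc
  obtain ⟨x, -, φ, hφ, hx⟩ := hcomp.tendsto_subseq (x := fun q => y q 0)
    (fun q i _ => abs_le.1 (hy1 q 0 i))
  have hlim : ∀ j, Tendsto (fun q => y (φ q) j) atTop (𝓝 x) := by
    intro j
    rw [tendsto_pi_nhds] at hx ⊢
    intro i
    have h0 : Tendsto (fun q : ℕ => (1 : ℝ) / ((2 * ((φ q : ℕ) + 1) : ℤ) : ℝ)) atTop (𝓝 0) := by
      have h1 : Tendsto (fun q : ℕ => (1 : ℝ) / ((q : ℝ) + 1)) atTop (𝓝 0) :=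
        tendsto_one_div_add_atTop_nhds_zero_nat
      have h2 := (h1.comp hφ.tendsto_atTop).const_mul (1 / 2)
      rw [mul_zero] at h2
      refine h2.congr fun q => ?_
      simp only [Function.comp]
      push_cast
      field_simp
    have h3 : Tendsto (fun q => y (φ q) j i - y (φ q) 0 i) atTop (𝓝 0) :=
      squeeze_zero_norm (fun q => hy2 (φ q) j i) h0
    have h4 := h3.add (hx i)
    rw [zero_add] at h4
    refine h4.congr fun q => ?_
    simp
  refine ⟨x, fun a => ?_⟩
  have h1 := ((hF a).tendsto x).comp (hlim a)
  have h2 := ((hF a).tendsto x).comp (hlim (a + 1))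
  have h3 := le_of_tendsto' (h1.mul h2) (fun q => hy3 (φ q) a)
  nlinarith [mul_self_nonneg (F a x)]

/-- The general version over any finite index type. -/
theorem cont' {ι : Type*} [Fintype ι] (blk : ι → ℕ) (T : ι → ℕ → ZMod 2)
    (hT1 : ∀ a, T a (blk a) = 1) (hT0 : ∀ a b, blk a < b → T a b = 0)
    (F : ι → (ι → ℝ) → ℝ) (hF : ∀ a, Continuous (F a))
    (hsym : ∀ a b x c, (∀ i, |x i| ≤ 1) → blk c = b → |x c| = 1 →
      (T a b = 1 → F a (fun i => if blk i = b then - x i else x i) = - F a x) ∧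
      (T a b = 0 → F a (fun i => if blk i = b then - x i else x i) = F a x)) :
    ∃ x : ι → ℝ, ∀ a, F a x = 0 := by
  let e := Fintype.equivFin ι
  obtain ⟨x, hx⟩ := cont (blk ∘ e.symm) (T ∘ e.symm) (fun a => hT1 _) (fun a b h => hT0 _ b h)
    (fun a x => F (e.symm a) (x ∘ e))
    (fun a => (hF _).comp (by fun_prop)) (by
      intro a b x c hx hc hxc
      have := hsym (e.symm a) b (x ∘ e) (e.symm c) (fun i => hx _) hc (by simpa using hxc)
      have h2 : negB (blk ∘ e.symm) b x ∘ e = (fun i => if blk i = b then - (x ∘ e) i else (x ∘ e) i) := by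
        funext i
        simp [negB]
      simp only [h2]
      exact this)
  exact ⟨x ∘ e, fun a => by simpa using hx (e a)⟩

end CT

namespace CT

section frames

variable (k m d : ℕ)

/-- Index type of coordinates. -/
abbrev Ix := (i : Fin k) × Fin (m + i)

/-- Unnormalized frame vector. -/
noncomputable def uu (x : Ix k m → ℝ) (i : Fin k) : EuclideanSpace ℝ (Fin d) :=
  WithLp.toLp 2 fun c => if h : (c : ℕ) < m + i then x ⟨i, ⟨c, h⟩⟩
    else if (c : ℕ) = m + i then 1 - ‖fun j : Fin (m + i) => x ⟨i, j⟩‖ else 0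

/-- Normalized frame vector. -/
noncomputable def ww (x : Ix k m → ℝ) (i : Fin k) : EuclideanSpace ℝ (Fin d) :=
  (‖uu k m d x i‖)⁻¹ • uu k m d x i

variable {k m d}

lemma uu_ne (hd : m + k = d) (x : Ix k m → ℝ) (i : Fin k) : uu k m d x i ≠ 0 := by
  intro h
  have h1 : ∀ c : Fin d, (uu k m d x i) c = 0 := by intro c; rw [h]; rfl
  have h2 : (fun j : Fin (m + i) => x ⟨i, j⟩) = 0 := by
    funext j
    have := h1 ⟨j, by omega⟩
    simpa [uu] using this
  have h3 := h1 ⟨m + i, by omega⟩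
  simp [uu, h2] at h3

lemma uu_cont : Continuous (uu k m d) := by
  refine continuous_pi fun i => ?_
  unfold uu
  refine (PiLp.continuous_toLp 2 _).comp (continuous_pi fun c => ?_)
  split_ifs <;> fun_prop

lemma ww_cont (hd : m + k = d) : Continuous (ww k m d) := by
  refine continuous_pi fun i => ?_
  unfold ww
  have h : Continuous fun x => uu k m d x i := (continuous_apply i).comp uu_cont
  exact (h.norm.inv₀ fun x => norm_ne_zero_iff.2 (uu_ne hd x i)).smul h

lemma ww_norm (hd : m + k = d) (x : Ix k m → ℝ) (i : Fin k) : ‖ww k m d x i‖ = 1 := by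
  unfold ww
  exact norm_smul_inv_norm (uu_ne hd x i)

lemma ww_flip (x : Ix k m → ℝ) (hx : ∀ a, |x a| ≤ 1) (c : Ix k m) (hc : |x c| = 1) :
    ww k m d (fun a => if (a.1 : ℕ) = c.1 then - x a else x a) =
      fun i => if i = c.1 then - ww k m d x i else ww k m d x i := by
  have hu : ∀ i, uu k m d (fun a => if (a.1 : ℕ) = c.1 then - x a else x a) i =
      if i = c.1 then - uu k m d x i else uu k m d x i := by
    intro i
    by_cases hi : i = c.1
    · subst hi
      rw [if_pos rfl]
      have hn : ‖fun j : Fin (m + c.1) => x ⟨c.1, j⟩‖ = 1 := by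
        apply le_antisymm
        · rw [pi_norm_le_iff_of_nonneg zero_le_one]
          intro j; exact hx _
        · rw [← hc]
          exact norm_le_pi_norm (fun j : Fin (m + c.1) => x ⟨c.1, j⟩) c.2
      have hn' : ‖fun j : Fin (m + c.1) => - x ⟨c.1, j⟩‖ = 1 := by
        rw [← hn]; exact norm_neg (fun j : Fin (m + c.1) => x ⟨c.1, j⟩)
      ext e
      simp only [uu, PiLp.neg_apply, if_true, hn, hn']
      split_ifs <;> simp
    · rw [if_neg hi]
      have hi' : (i : ℕ) ≠ c.1 := fun h => hi (Fin.ext h)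
      simp [uu, hi']
  funext i
  unfold ww
  rw [hu]
  split_ifs <;> simp

theorem frames (hd : m + k = d)
    (C : Fin m → (Fin k → EuclideanSpace ℝ (Fin d)) → Fin k → ℝ)
    (hC : ∀ j, ContinuousOn (C j) {W | ∀ i, ‖W i‖ = 1})
    (hodd : ∀ j W b, (∀ i, ‖W i‖ = 1) → C j (fun i => if i = b then - W i else W i) =
      fun i => if i = b then - C j W i else C j W i) :
    ∃ W : Fin k → EuclideanSpace ℝ (Fin d), Orthonormal ℝ W ∧ ∀ j, C j W = 0 := by
  let T : Ix k m → ℕ → ZMod 2 := fun a b =>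
    if b = a.1 then 1 else if (a.2 : ℕ) = m + b then 1 else 0
  let F : Ix k m → (Ix k m → ℝ) → ℝ := fun a x =>
    if h : (a.2 : ℕ) < m then C ⟨a.2, h⟩ (ww k m d x) a.1
    else ⟪ww k m d x a.1, ww k m d x ⟨a.2 - m, by omega⟩⟫_ℝ
  have hw := ww_cont hd
  obtain ⟨x, hx⟩ := cont' (ι := Ix k m) (fun a => a.1) T (fun a => by simp [T])
    (fun a b h => by
      have h1 : b ≠ a.1 := by omega
      have h2 : (a.2 : ℕ) ≠ m + b := by omega
      simp [T, h1, h2]) F (by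
      intro a
      simp only [F]
      split_ifs with h
      · have := (hC ⟨a.2, h⟩).comp_continuous hw (fun x i => ww_norm hd x i)
        exact (continuous_apply a.1).comp this
      · exact ((continuous_apply _).comp hw).inner ((continuous_apply _).comp hw)) (by
      intro a b x c hx hc hxc
      have hflip := ww_flip (d := d) x hx c hxc
      subst hc
      simp only [F]
      rw [hflip]
      split_ifs with h
      · rw [hodd _ _ _ (fun i => ww_norm hd x i)]
        have h1 : (a.2 : ℕ) ≠ m + c.1 := by omega
        by_cases h2 : a.1 = c.1
        · simp [T, h2]
        · have h3 : (c.1 : ℕ) ≠ a.1 := fun h => h2 (Fin.ext h.symm)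
          simp [T, h2, h1, h3]
      · beta_reduce
        by_cases h2 : a.1 = c.1
        · have h3 : (⟨a.2 - m, by omega⟩ : Fin k) ≠ c.1 := by
            intro h4
            have := congrArg Fin.val h4
            simp at this
            have h5 := congrArg Fin.val h2
            omega
          rw [if_pos h2, if_neg h3]
          simp [T, h2]
        · have h3 : (c.1 : ℕ) ≠ a.1 := fun h => h2 (Fin.ext h.symm)
          rw [if_neg h2]
          by_cases h4 : (⟨a.2 - m, by omega⟩ : Fin k) = c.1
          · have h5 : (a.2 : ℕ) = m + c.1 := by
              have := congrArg Fin.val h4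
              simp at this
              omega
            rw [if_pos h4]
            simp [T, h5]
          · have h5 : (a.2 : ℕ) ≠ m + c.1 := by
              intro h6; apply h4; ext; simp; omega
            rw [if_neg h4]
            simp [T, h3, h5])
  refine ⟨ww k m d x, ⟨ww_norm hd x, ?_⟩, ?_⟩
  · have hlt : ∀ i j : Fin k, j < i → ⟪ww k m d x i, ww k m d x j⟫_ℝ = 0 := by
      intro i j hij
      have := hx ⟨i, ⟨m + j, by simpa using hij⟩⟩
      simpa [F] using this
    intro i j hij
    rcases lt_or_gt_of_ne hij with h | h
    · rw [real_inner_comm]; exact hlt _ _ h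
    · exact hlt _ _ h
  · intro j
    funext i
    have := hx ⟨i, ⟨j, by omega⟩⟩
    simpa [F] using this

end frames

end CT

namespace CT

theorem center0 {k : ℕ} (ν : Measure (Fin k → ℝ)) [IsProbabilityMeasure ν] :
    ∃ p : Fin k → ℝ, ∀ K : Set (Fin k → ℝ), IsCompact K → Convex ℝ K →
      1 - 1 / ((k : ℝ) + 1) < ν.real K → p ∈ K := by
  let ι := {K : Set (Fin k → ℝ) // IsCompact K ∧ Convex ℝ K ∧ 1 - 1 / ((k : ℝ) + 1) < ν.real K}
  have h := Convex.helly_theorem_compact' (𝕜 := ℝ) (F := fun K : ι => K.1) (fun K => K.2.2.1)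
    (fun K => K.2.1) (by
      intro I hI
      rcases I.eq_empty_or_nonempty with rfl | hne
      · simp
      by_contra hcon
      rw [Set.not_nonempty_iff_eq_empty] at hcon
      have h1 : (⋃ i ∈ I, (i.1)ᶜ) = (Set.univ : Set (Fin k → ℝ)) := by
        rw [← Set.compl_empty, ← hcon]
        simp
      have h2 := measureReal_biUnion_finset_le (μ := ν) I (fun i => (i.1)ᶜ)
      rw [h1] at h2
      have h3 : ∑ i ∈ I, ν.real (i.1)ᶜ < ∑ i ∈ I, 1 / ((k : ℝ) + 1) := by
        apply Finset.sum_lt_sum_of_nonempty hne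
        intro i _
        rw [probReal_compl_eq_one_sub i.2.1.measurableSet]
        have := i.2.2.2
        linarith
      have h4 : ((I.card : ℕ) : ℝ) ≤ k + 1 := by
        rw [Module.finrank_fin_fun] at hI
        exact_mod_cast hI
      rw [Finset.sum_const, nsmul_eq_mul, mul_one_div] at h3
      have h5 : (I.card : ℝ) / (k + 1) ≤ 1 := by
        rw [div_le_one (by positivity)]; exact h4
      simp at h2
      linarith)
  obtain ⟨p, hp⟩ := h
  refine ⟨p, fun K h1 h2 h3 => ?_⟩
  exact Set.mem_iInter.1 hp ⟨K, h1, h2, h3⟩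

theorem center1 {k : ℕ} (ν : Measure (Fin k → ℝ)) [IsProbabilityMeasure ν] (p : Fin k → ℝ)
    (hp : ∀ K : Set (Fin k → ℝ), IsCompact K → Convex ℝ K →
      1 - 1 / ((k : ℝ) + 1) < ν.real K → p ∈ K) (a : Fin k → ℝ) :
    1 / ((k : ℝ) + 1) ≤ ν.real {y | 0 ≤ ∑ i, a i * (y i - p i)} := by
  by_contra hcon
  push Not at hcon
  have hcl : IsClosed {y : Fin k → ℝ | 0 ≤ ∑ i, a i * (y i - p i)} :=
    isClosed_le continuous_const (by fun_prop)
  have h1 : 1 - 1 / ((k : ℝ) + 1) < ν.real {y | 0 ≤ ∑ i, a i * (y i - p i)}ᶜ := by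
    rw [probReal_compl_eq_one_sub hcl.measurableSet]
    linarith
  have h2 : ENNReal.ofReal (1 - 1 / ((k : ℝ) + 1)) < ν {y | 0 ≤ ∑ i, a i * (y i - p i)}ᶜ := by
    rw [ENNReal.ofReal_lt_iff_lt_toReal _ (measure_ne_top _ _)]
    · exact h1
    · rw [sub_nonneg, div_le_one (by positivity)]
      linarith [(Nat.cast_nonneg k : (0 : ℝ) ≤ k)]
  obtain ⟨K, hK, hKc, hlt⟩ := hcl.isOpen_compl.exists_lt_isCompact h2
  have h3 : 1 - 1 / ((k : ℝ) + 1) < ν.real K := by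
    rw [ENNReal.ofReal_lt_iff_lt_toReal _ (measure_ne_top _ _)] at hlt
    · exact hlt
    · rw [sub_nonneg, div_le_one (by positivity)]
      linarith [(Nat.cast_nonneg k : (0 : ℝ) ≤ k)]
  have h4 : (0 : ℝ) ≤ 1 - 1 / ((k : ℝ) + 1) := by
    rw [sub_nonneg, div_le_one (by positivity)]
    linarith [(Nat.cast_nonneg k : (0 : ℝ) ≤ k)]
  have hne : K.Nonempty := by
    rw [Set.nonempty_iff_ne_empty]
    rintro rfl
    simp only [measureReal_empty] at h3
    linarith
  have hfc : Continuous (fun y : Fin k → ℝ => ∑ i, a i * (y i - p i)) := by fun_prop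
  obtain ⟨z, hz, hmax⟩ := hKc.exists_isMaxOn hne hfc.continuousOn
  have hzneg : ∑ i, a i * (z i - p i) < 0 := by
    have := hK hz
    simpa using this
  obtain ⟨R, hR⟩ := hKc.isBounded.subset_closedBall (0 : Fin k → ℝ)
  have hconv : Convex ℝ {y : Fin k → ℝ | ∑ i, a i * (y i - p i) ≤ ∑ i, a i * (z i - p i)} := by
    intro x hx y hy s t hs ht hst
    simp only [Set.mem_ofPred_eq] at hx hy ⊢
    have e : ∑ i, a i * ((s • x + t • y) i - p i) =
        s * ∑ i, a i * (x i - p i) + t * ∑ i, a i * (y i - p i) := by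
      rw [Finset.mul_sum, Finset.mul_sum, ← Finset.sum_add_distrib]
      apply Finset.sum_congr rfl
      intro i _
      have : t = 1 - s := by linarith
      subst this
      simp
      ring
    rw [e]
    have h5 := mul_le_mul_of_nonneg_left hx hs
    have h6 := mul_le_mul_of_nonneg_left hy ht
    have h7 : s * ∑ i, a i * (z i - p i) + t * ∑ i, a i * (z i - p i) =
      ∑ i, a i * (z i - p i) := by rw [← add_mul, hst, one_mul]
    linarith
  have hmem := hp (Metric.closedBall 0 R ∩
      {y : Fin k → ℝ | ∑ i, a i * (y i - p i) ≤ ∑ i, a i * (z i - p i)})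
    ((isCompact_closedBall _ _).inter_right (isClosed_le hfc continuous_const))
    ((convex_closedBall _ _).inter hconv)
    (h3.trans_le (measureReal_mono (fun y hy => ⟨hR hy, hmax hy⟩)))
  have := hmem.2
  simp at this
  linarith

section sel
variable {k d : ℕ}

/-- coordinates relative to a tuple -/
noncomputable def crd (W : Fin k → EuclideanSpace ℝ (Fin d)) (y : EuclideanSpace ℝ (Fin d)) : Fin k → ℝ :=
  fun i => ⟪W i, y⟫_ℝ

theorem center (μ : Measure (EuclideanSpace ℝ (Fin d))) [IsProbabilityMeasure μ] (R : ℝ)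
    (hR : 1 - 1 / ((k : ℝ) + 1) < μ.real (Metric.closedBall 0 R)) (hR0 : 0 ≤ R)
    (W : Fin k → EuclideanSpace ℝ (Fin d)) (hW : ∀ i, ‖W i‖ = 1) :
    ∃ p : Fin k → ℝ, ‖p‖ ≤ R ∧ ∀ a : Fin k → ℝ,
      1 / ((k : ℝ) + 1) ≤ μ.real {y | 0 ≤ ∑ i, a i * (⟪W i, y⟫_ℝ - p i)} := by
  have hm : Continuous (crd W) := by unfold crd; fun_prop
  have : IsProbabilityMeasure (μ.map (crd W)) :=
    Measure.isProbabilityMeasure_map hm.aemeasurable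
  obtain ⟨p, hp⟩ := center0 (μ.map (crd W))
  refine ⟨p, ?_, fun a => ?_⟩
  · have := hp (Metric.closedBall 0 R) (isCompact_closedBall _ _) (convex_closedBall _ _) (by
      rw [map_measureReal_apply hm.measurable Metric.isClosed_closedBall.measurableSet]
      refine hR.trans_le (measureReal_mono ?_)
      intro y hy
      simp only [mem_closedBall_zero_iff, Set.mem_preimage] at hy ⊢
      rw [pi_norm_le_iff_of_nonneg hR0]
      intro i
      refine (norm_inner_le_norm _ _).trans ?_
      rw [hW, one_mul]; exact hy)
    simpa using this
  · have h := center1 _ p hp a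
    have hcl : IsClosed {y : Fin k → ℝ | 0 ≤ ∑ i, a i * (y i - p i)} :=
      isClosed_le continuous_const (by fun_prop)
    rw [map_measureReal_apply hm.measurable hcl.measurableSet] at h
    exact h

/-- smoothed step -/
noncomputable def rho (n : ℕ) (t : ℝ) : ℝ := max 0 (min 1 (1 + n * t))

theorem rho_cont (n : ℕ) : Continuous (rho n) := by unfold rho; fun_prop
theorem rho_nonneg (n : ℕ) (t : ℝ) : 0 ≤ rho n t := le_max_left _ _
theorem rho_le_one (n : ℕ) (t : ℝ) : rho n t ≤ 1 := max_le zero_le_one (min_le_left _ _)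
theorem rho_mono (n : ℕ) {s t : ℝ} (h : s ≤ t) : rho n s ≤ rho n t := by
  unfold rho; gcongr
theorem rho_one (n : ℕ) {t : ℝ} (h : 0 ≤ t) : rho n t = 1 := by
  unfold rho
  have : 0 ≤ (n : ℝ) * t := by positivity
  rw [min_eq_left (by linarith)]; simp
theorem rho_anti {n n' : ℕ} (h : n' ≤ n) (t : ℝ) : rho n t ≤ rho n' t := by
  rcases le_total 0 t with ht | ht
  · rw [rho_one n ht, rho_one n' ht]
  · unfold rho
    have : (n' : ℝ) ≤ n := by exact_mod_cast h
    have : (n : ℝ) * t ≤ n' * t := mul_le_mul_of_nonpos_right this ht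
    gcongr
theorem rho_zero {n : ℕ} {t : ℝ} (h : 1 + n * t < 0) : rho n t = 0 := by
  unfold rho
  exact max_eq_left ((min_le_right _ _).trans h.le)

/-- smoothed depth in direction `a` -/
noncomputable def g (n : ℕ) (μ : Measure (EuclideanSpace ℝ (Fin d)))
    (W : Fin k → EuclideanSpace ℝ (Fin d)) (p a : Fin k → ℝ) : ℝ :=
  ∫ y, rho n (∑ i, a i * (⟪W i, y⟫_ℝ - p i)) ∂μ

theorem g_int (n : ℕ) (μ : Measure (EuclideanSpace ℝ (Fin d))) [IsProbabilityMeasure μ]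
    (W : Fin k → EuclideanSpace ℝ (Fin d)) (p a : Fin k → ℝ) :
    Integrable (fun y => rho n (∑ i, a i * (⟪W i, y⟫_ℝ - p i))) μ := by
  have hc : Continuous (fun y => rho n (∑ i, a i * (⟪W i, y⟫_ℝ - p i))) :=
    (rho_cont n).comp (by fun_prop)
  refine Integrable.of_bound hc.aestronglyMeasurable 1 (Filter.Eventually.of_forall fun y => ?_)
  rw [Real.norm_of_nonneg (rho_nonneg _ _)]
  exact rho_le_one _ _

theorem g_cont (n : ℕ) (μ : Measure (EuclideanSpace ℝ (Fin d))) [IsProbabilityMeasure μ] :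
    Continuous (fun x : ((Fin k → EuclideanSpace ℝ (Fin d)) × (Fin k → ℝ)) × (Fin k → ℝ) =>
      g n μ x.1.1 x.1.2 x.2) := by
  unfold g
  refine continuous_of_dominated (bound := fun _ => 1) (fun x => (g_int n μ _ _ _).1)
    (fun x => Filter.Eventually.of_forall fun y => ?_) (integrable_const _)
    (Filter.Eventually.of_forall fun y => (rho_cont n).comp (by fun_prop))
  rw [Real.norm_of_nonneg (rho_nonneg _ _)]
  exact rho_le_one _ _

theorem g_mono_p (n : ℕ) (μ : Measure (EuclideanSpace ℝ (Fin d))) [IsProbabilityMeasure μ]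
    (W : Fin k → EuclideanSpace ℝ (Fin d)) (p q a : Fin k → ℝ)
    (h : ∑ i, a i * q i ≤ ∑ i, a i * p i) : g n μ W p a ≤ g n μ W q a := by
  refine integral_mono (g_int n μ W p a) (g_int n μ W q a) (fun y => rho_mono n ?_)
  simp only [mul_sub, Finset.sum_sub_distrib]
  linarith

theorem g_anti (n n' : ℕ) (hn : n' ≤ n) (μ : Measure (EuclideanSpace ℝ (Fin d)))
    [IsProbabilityMeasure μ]
    (W : Fin k → EuclideanSpace ℝ (Fin d)) (p a : Fin k → ℝ) : g n μ W p a ≤ g n' μ W p a :=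
  integral_mono (g_int n μ W p a) (g_int n' μ W p a) (fun _ => rho_anti hn _)

theorem g_ge (n : ℕ) (μ : Measure (EuclideanSpace ℝ (Fin d))) [IsProbabilityMeasure μ]
    (W : Fin k → EuclideanSpace ℝ (Fin d)) (p a : Fin k → ℝ) :
    μ.real {y | 0 ≤ ∑ i, a i * (⟪W i, y⟫_ℝ - p i)} ≤ g n μ W p a := by
  have hcl : IsClosed {y : EuclideanSpace ℝ (Fin d) | 0 ≤ ∑ i, a i * (⟪W i, y⟫_ℝ - p i)} :=
    isClosed_le continuous_const (by fun_prop)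
  rw [← integral_indicator_one hcl.measurableSet]
  refine integral_mono ((integrable_const (1 : ℝ)).indicator hcl.measurableSet)
    (g_int n μ W p a) (fun y => ?_)
  rw [Set.indicator_apply]
  split_ifs with h
  · rw [rho_one n h]; simp
  · exact rho_nonneg _ _

theorem g_le (n : ℕ) (μ : Measure (EuclideanSpace ℝ (Fin d))) [IsProbabilityMeasure μ]
    (W : Fin k → EuclideanSpace ℝ (Fin d)) (p a : Fin k → ℝ) :
    g n μ W p a ≤ μ.real {y | 0 ≤ 1 + n * ∑ i, a i * (⟪W i, y⟫_ℝ - p i)} := by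
  have hcl : IsClosed {y : EuclideanSpace ℝ (Fin d) |
      0 ≤ 1 + n * ∑ i, a i * (⟪W i, y⟫_ℝ - p i)} :=
    isClosed_le continuous_const (by fun_prop)
  rw [← integral_indicator_one hcl.measurableSet]
  refine integral_mono (g_int n μ W p a)
    ((integrable_const (1 : ℝ)).indicator hcl.measurableSet) (fun y => ?_)
  rw [Set.indicator_apply]
  split_ifs with h
  · exact rho_le_one _ _
  · simp only [Set.mem_ofPred_eq, not_le] at h
    exact (rho_zero h).le

end sel
end CT

namespace CT
section sel2
variable {k d : ℕ}

/-- sign flip of one entry -/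
def fl {k : ℕ} {E : Type*} [Neg E] (b : Fin k) (x : Fin k → E) : Fin k → E :=
  fun i => if i = b then - x i else x i

theorem fl_fl {E : Type*} [InvolutiveNeg E] (b : Fin k) (x : Fin k → E) : fl b (fl b x) = x := by
  funext i
  unfold fl
  split_ifs <;> simp

theorem fl_norm (b : Fin k) (x : Fin k → ℝ) : ‖fl b x‖ = ‖x‖ := by
  have h : ∀ x : Fin k → ℝ, ‖fl b x‖ ≤ ‖x‖ := by
    intro x
    rw [pi_norm_le_iff_of_nonneg (norm_nonneg _)]
    intro i
    unfold fl
    split_ifs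
    · rw [norm_neg]; exact norm_le_pi_norm x i
    · exact norm_le_pi_norm x i
  refine le_antisymm (h x) ?_
  conv_lhs => rw [← fl_fl b x]
  exact h _

theorem g_fl (n : ℕ) (μ : Measure (EuclideanSpace ℝ (Fin d)))
    (W : Fin k → EuclideanSpace ℝ (Fin d)) (p a : Fin k → ℝ) (b : Fin k) :
    g n μ (fl b W) (fl b p) (fl b a) = g n μ W p a := by
  unfold g
  congr 1
  funext y
  congr 1
  apply Finset.sum_congr rfl
  intro i _
  unfold fl
  split_ifs
  · rw [inner_neg_left]; ring
  · rfl

/-- smoothed depth -/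
noncomputable def D (n : ℕ) (μ : Measure (EuclideanSpace ℝ (Fin d)))
    (W : Fin k → EuclideanSpace ℝ (Fin d)) (p : Fin k → ℝ) : ℝ :=
  sInf (Set.image (fun a => g n μ W p a) (Metric.sphere 0 1))

theorem D_cont (n : ℕ) (μ : Measure (EuclideanSpace ℝ (Fin d))) [IsProbabilityMeasure μ] :
    Continuous (fun x : (Fin k → EuclideanSpace ℝ (Fin d)) × (Fin k → ℝ) => D n μ x.1 x.2) := by
  unfold D
  exact IsCompact.continuous_sInf (f := fun (x : (Fin k → EuclideanSpace ℝ (Fin d)) ×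
    (Fin k → ℝ)) a => g n μ x.1 x.2 a) (isCompact_sphere (0 : Fin k → ℝ) 1) (g_cont n μ)

theorem D_cont1 (n : ℕ) (μ : Measure (EuclideanSpace ℝ (Fin d))) [IsProbabilityMeasure μ]
    (p : Fin k → ℝ) :
    Continuous (fun W : (Fin k → EuclideanSpace ℝ (Fin d)) => D n μ W p) := by
  have h : Continuous (fun W : Fin k → EuclideanSpace ℝ (Fin d) => (W, p)) := by fun_prop
  exact Continuous.comp (g := fun x : (Fin k → EuclideanSpace ℝ (Fin d)) × (Fin k → ℝ) =>
    D n μ x.1 x.2) (f := fun W => (W, p)) (D_cont n μ) h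

theorem D_fl (n : ℕ) (μ : Measure (EuclideanSpace ℝ (Fin d)))
    (W : Fin k → EuclideanSpace ℝ (Fin d)) (p : Fin k → ℝ) (b : Fin k) :
    D n μ (fl b W) (fl b p) = D n μ W p := by
  unfold D
  congr 1
  ext r
  constructor
  · rintro ⟨a, ha, rfl⟩
    refine ⟨fl b a, by simpa [fl_norm] using ha, ?_⟩
    dsimp only
    rw [← g_fl n μ W p (fl b a) b, fl_fl]
  · rintro ⟨a, ha, rfl⟩
    exact ⟨fl b a, by simpa [fl_norm] using ha, g_fl n μ W p a b⟩

theorem D_le (n : ℕ) (μ : Measure (EuclideanSpace ℝ (Fin d))) [IsProbabilityMeasure μ]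
    (W : Fin k → EuclideanSpace ℝ (Fin d)) (p a : Fin k → ℝ) (ha : ‖a‖ = 1) :
    D n μ W p ≤ g n μ W p a := by
  refine csInf_le ⟨0, ?_⟩ ⟨a, by simpa using ha, rfl⟩
  rintro _ ⟨a, _, rfl⟩
  exact integral_nonneg (fun y => rho_nonneg _ _)

theorem le_D (hk : 0 < k) (n : ℕ) (μ : Measure (EuclideanSpace ℝ (Fin d)))
    [IsProbabilityMeasure μ]
    (W : Fin k → EuclideanSpace ℝ (Fin d)) (p : Fin k → ℝ) (r : ℝ)
    (h : ∀ a, r ≤ g n μ W p a) : r ≤ D n μ W p := by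
  have : Nonempty (Fin k) := ⟨⟨0, hk⟩⟩
  refine le_csInf ?_ ?_
  · exact (NormedSpace.sphere_nonempty.2 zero_le_one).image _
  · rintro _ ⟨a, _, rfl⟩
    exact h a

theorem symm_set (P₀ : Finset (Fin k → ℝ)) (R : ℝ) (h₀ : ∀ p ∈ P₀, ‖p‖ ≤ R) :
    ∃ P : Finset (Fin k → ℝ), P₀ ⊆ P ∧ (∀ p ∈ P, ‖p‖ ≤ R) ∧ ∀ p ∈ P, ∀ b, fl b p ∈ P := by
  classical
  refine ⟨(P₀ ×ˢ (Finset.univ : Finset (Finset (Fin k)))).image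
    (fun x i => if i ∈ x.2 then - x.1 i else x.1 i), ?_, ?_, ?_⟩
  · intro p hp
    rw [Finset.mem_image]
    exact ⟨(p, ∅), by simp [hp], by simp⟩
  · intro p hp
    rw [Finset.mem_image] at hp
    obtain ⟨⟨q, T⟩, hq, rfl⟩ := hp
    simp only [Finset.mem_product, Finset.mem_univ, and_true] at hq
    refine le_trans ?_ (h₀ q hq)
    rw [pi_norm_le_iff_of_nonneg (norm_nonneg _)]
    intro i
    dsimp only
    split_ifs
    · rw [norm_neg]; exact norm_le_pi_norm q i
    · exact norm_le_pi_norm q i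
  · intro p hp b
    rw [Finset.mem_image] at hp ⊢
    obtain ⟨⟨q, T⟩, hq, rfl⟩ := hp
    simp only [Finset.mem_product, Finset.mem_univ, and_true] at hq
    refine ⟨(q, symmDiff T {b}), by simp [hq], ?_⟩
    funext i
    unfold fl
    simp only [Finset.mem_symmDiff, Finset.mem_singleton]
    by_cases h1 : i = b <;> by_cases h2 : i ∈ T <;> simp [h1, h2] <;> subst h1 <;> simp [h2]

theorem isCompact_unit : IsCompact {W : Fin k → EuclideanSpace ℝ (Fin d) | ∀ i, ‖W i‖ = 1} := by
  have : {W : Fin k → EuclideanSpace ℝ (Fin d) | ∀ i, ‖W i‖ = 1} =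
      Set.univ.pi (fun _ => Metric.sphere 0 1) := by
    ext W; simp
  rw [this]
  exact isCompact_univ_pi (fun _ => isCompact_sphere _ _)

theorem selection (hk : 0 < k) (n : ℕ) (μ : Measure (EuclideanSpace ℝ (Fin d)))
    [IsProbabilityMeasure μ] (R : ℝ)
    (hR : 1 - 1 / ((k : ℝ) + 1) < μ.real (Metric.closedBall 0 R)) (hR0 : 0 ≤ R)
    (α : ℝ) (hα : α < 1 / ((k : ℝ) + 1)) :
    ∃ c : (Fin k → EuclideanSpace ℝ (Fin d)) → (Fin k → ℝ),
      ContinuousOn c {W | ∀ i, ‖W i‖ = 1} ∧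
      (∀ W b, c (fl b W) = fl b (c W)) ∧
      ∀ W, (∀ i, ‖W i‖ = 1) → ‖c W‖ ≤ R ∧ ∀ a, ‖a‖ = 1 → α ≤ g n μ W (c W) a := by
  classical
  obtain ⟨t, ht⟩ := isCompact_unit.elim_finite_subcover
    (fun p : {p : Fin k → ℝ // ‖p‖ ≤ R} =>
      {W : Fin k → EuclideanSpace ℝ (Fin d) | α < D n μ W p.1})
    (fun p => isOpen_lt continuous_const (D_cont1 n μ p.1))
    (by
      intro W hW
      obtain ⟨p, hpR, hp⟩ := center μ R hR hR0 W hW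
      rw [Set.mem_iUnion]
      exact ⟨⟨p, hpR⟩, hα.trans_le (le_D hk n μ W p _ (fun a => (hp a).trans (g_ge n μ W p a)))⟩)
  obtain ⟨P, hP₀, hPR, hPf⟩ := symm_set (t.image Subtype.val) R (by
    intro p hp
    rw [Finset.mem_image] at hp
    obtain ⟨q, _, rfl⟩ := hp
    exact q.2)
  let φ : (Fin k → EuclideanSpace ℝ (Fin d)) → (Fin k → ℝ) → ℝ := fun W p => max 0 (D n μ W p - α)
  have hφc : ∀ p, Continuous (fun W => φ W p) := fun p =>
    Continuous.max continuous_const ((D_cont1 n μ p).sub continuous_const)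
  have hφ0 : ∀ W p, 0 ≤ φ W p := fun W p => le_max_left _ _
  have hφf : ∀ W p b, φ (fl b W) (fl b p) = φ W p := fun W p b => by
    simp only [φ, D_fl]
  have hpos : ∀ W : Fin k → EuclideanSpace ℝ (Fin d), (∀ i, ‖W i‖ = 1) → 0 < ∑ p ∈ P, φ W p := by
    intro W hW
    have := ht hW
    simp only [Set.mem_iUnion, Set.mem_ofPred_eq, exists_prop] at this
    obtain ⟨q, hq, hlt⟩ := this
    refine Finset.sum_pos' (fun p _ => hφ0 W p)
      ⟨q.1, hP₀ (Finset.mem_image_of_mem _ hq), lt_max_of_lt_right (by linarith)⟩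
  refine ⟨fun W => (∑ p ∈ P, φ W p)⁻¹ • ∑ p ∈ P, φ W p • p, ?_, ?_, ?_⟩
  · have h1 : Continuous (fun W => ∑ p ∈ P, φ W p) := continuous_finsetSum _ (fun p _ => hφc p)
    have h2 : Continuous (fun W => ∑ p ∈ P, φ W p • p) :=
      continuous_finsetSum _ (fun p _ => (hφc p).smul continuous_const)
    have h3 : ContinuousOn (fun W => (∑ p ∈ P, φ W p)⁻¹) {W | ∀ i, ‖W i‖ = 1} :=
      h1.continuousOn.inv₀ (fun W hW => (hpos W hW).ne')
    exact h3.smul h2.continuousOn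
  · intro W b
    have e1 : ∑ p ∈ P, φ (fl b W) p = ∑ p ∈ P, φ W p := by
      refine Finset.sum_nbij' (fl b) (fl b) (fun p hp => hPf p hp b) (fun p hp => hPf p hp b)
        (fun p _ => fl_fl b p) (fun p _ => fl_fl b p) (fun p _ => ?_)
      rw [← hφf W (fl b p) b, fl_fl]
    have e2 : ∑ p ∈ P, φ (fl b W) p • p = ∑ p ∈ P, φ W p • fl b p := by
      refine Finset.sum_nbij' (fl b) (fl b) (fun p hp => hPf p hp b) (fun p hp => hPf p hp b)
        (fun p _ => fl_fl b p) (fun p _ => fl_fl b p) (fun p _ => ?_)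
      rw [← hφf W (fl b p) b, fl_fl]
    dsimp only
    rw [e1, e2]
    funext i
    unfold fl
    simp only [Pi.smul_apply, Finset.sum_apply, smul_eq_mul]
    split_ifs
    · simp
    · rfl
  · intro W hW
    have hS := hpos W hW
    constructor
    · rw [norm_smul, norm_inv, Real.norm_of_nonneg hS.le, inv_mul_le_iff₀ hS]
      refine (norm_sum_le _ _).trans ?_
      rw [Finset.sum_mul]
      refine Finset.sum_le_sum (fun p hp => ?_)
      rw [norm_smul, Real.norm_of_nonneg (hφ0 W p)]
      exact mul_le_mul_of_nonneg_left (hPR p hp) (hφ0 W p)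
    · intro a ha
      set c : Fin k → ℝ := (∑ p ∈ P, φ W p)⁻¹ • ∑ p ∈ P, φ W p • p with hc
      have hac : (∑ p ∈ P, φ W p) * ∑ i, a i * c i = ∑ p ∈ P, φ W p * ∑ i, a i * p i := by
        have e : ∀ i, (∑ p ∈ P, φ W p) * c i = ∑ p ∈ P, φ W p * p i := by
          intro i
          simp only [hc, Pi.smul_apply, Finset.sum_apply, smul_eq_mul]
          rw [mul_inv_cancel_left₀ hS.ne']
        calc (∑ p ∈ P, φ W p) * ∑ i, a i * c i = ∑ i, a i * ((∑ p ∈ P, φ W p) * c i) := by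
              rw [Finset.mul_sum]
              exact Finset.sum_congr rfl (fun i _ => by ring)
          _ = ∑ i, a i * ∑ p ∈ P, φ W p * p i := by simp only [e]
          _ = ∑ p ∈ P, φ W p * ∑ i, a i * p i := by
              simp only [Finset.mul_sum]
              rw [Finset.sum_comm]
              exact Finset.sum_congr rfl (fun p _ => Finset.sum_congr rfl (fun i _ => by ring))
      obtain ⟨p, hp, hφp, hle⟩ : ∃ p ∈ P, 0 < φ W p ∧ ∑ i, a i * c i ≤ ∑ i, a i * p i := by
        by_contra hcon
        push Not at hcon
        obtain ⟨q, hq, hqpos⟩ : ∃ q ∈ P, 0 < φ W q := by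
          by_contra h
          push Not at h
          exact absurd hS (not_lt.2 (Finset.sum_nonpos h))
        have : ∑ p ∈ P, φ W p * ∑ i, a i * p i < ∑ p ∈ P, φ W p * ∑ i, a i * c i := by
          refine Finset.sum_lt_sum (fun p hp => ?_) ⟨q, hq, ?_⟩
          · rcases (hφ0 W p).eq_or_lt with h | h
            · rw [← h]; simp
            · exact mul_le_mul_of_nonneg_left (hcon p hp h).le h.le
          · exact mul_lt_mul_of_pos_left (hcon q hq hqpos) hqpos
        rw [← Finset.sum_mul, hac] at this
        exact lt_irrefl _ this
      have h1 : α < D n μ W p := by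
        by_contra h
        push Not at h
        have : φ W p = 0 := max_eq_left (by linarith)
        linarith
      exact h1.le.trans ((D_le n μ W p a ha).trans (g_mono_p n μ W p c a hle))

end sel2
end CT

namespace CT

theorem exists_R {d : ℕ} (μ : Measure (EuclideanSpace ℝ (Fin d))) [IsProbabilityMeasure μ]
    (r : ℝ) (hr : r < 1) : ∃ N : ℕ, ∀ n : ℕ, N ≤ n → r < μ.real (Metric.closedBall 0 n) := by
  have h1 : Filter.Tendsto (fun n : ℕ => μ (Metric.closedBall 0 n)) Filter.atTop
      (nhds (μ (⋃ n : ℕ, Metric.closedBall 0 n))) :=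
    tendsto_measure_iUnion_atTop (fun a b hab => Metric.closedBall_subset_closedBall (by
      exact_mod_cast hab))
  rw [Metric.iUnion_closedBall_nat, measure_univ] at h1
  have h2 := (ENNReal.tendsto_toReal ENNReal.one_ne_top).comp h1
  have h3 := h2.eventually (lt_mem_nhds (by simpa using hr : r < (1 : ℝ≥0∞).toReal))
  exact Filter.eventually_atTop.1 h3

theorem step {k m d : ℕ} (hk : 0 < k) (hd : m + k = d)
    (μ : Fin (m + 1) → Measure (EuclideanSpace ℝ (Fin d)))
    (hprob : ∀ i, IsProbabilityMeasure (μ i)) (R : ℝ) (hR0 : 0 ≤ R)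
    (hR : ∀ j, 1 - 1 / ((k : ℝ) + 1) < (μ j).real (Metric.closedBall 0 R)) (n : ℕ)
    (α : ℝ) (hα : α < 1 / ((k : ℝ) + 1)) :
    ∃ W : Fin k → EuclideanSpace ℝ (Fin d), Orthonormal ℝ W ∧ ∃ c : Fin k → ℝ, ‖c‖ ≤ R ∧
      ∀ j a, ‖a‖ = 1 → α ≤ g n (μ j) W c a := by
  choose c hc hodd hmain using fun j => selection hk n (μ j) R (hR j) hR0 α hα
  obtain ⟨W, hW, h0⟩ := frames hd (fun (j : Fin m) W => c j.succ W - c 0 W)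
    (fun j => (hc j.succ).sub (hc 0)) (by
      intro j W b _
      have h1 := hodd j.succ W b
      have h2 := hodd 0 W b
      unfold fl at h1 h2
      rw [h1, h2]
      funext i
      simp only [Pi.sub_apply]
      split_ifs
      · ring
      · rfl)
  have hW1 : ∀ i, ‖W i‖ = 1 := hW.1
  refine ⟨W, hW, c 0 W, (hmain 0 W hW1).1, fun j a ha => ?_⟩
  have : c j W = c 0 W := by
    refine Fin.cases rfl (fun j => ?_) j
    exact sub_eq_zero.1 (h0 j)
  rw [← this]
  exact (hmain j W hW1).2 a ha

theorem isClosed_on {k d : ℕ} :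
    IsClosed {W : Fin k → EuclideanSpace ℝ (Fin d) | Orthonormal ℝ W} := by
  simp only [orthonormal_iff_ite]
  simp only [Set.ofPred_forall]
  refine isClosed_iInter fun i => isClosed_iInter fun j => isClosed_eq ?_ continuous_const
  fun_prop

theorem limit {k m d : ℕ} (hk : 0 < k) (hd : m + k = d)
    (μ : Fin (m + 1) → Measure (EuclideanSpace ℝ (Fin d)))
    (hprob : ∀ i, IsProbabilityMeasure (μ i)) :
    ∃ W : Fin k → EuclideanSpace ℝ (Fin d), Orthonormal ℝ W ∧ ∃ c : Fin k → ℝ,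
      ∀ j (n : ℕ) a, ‖a‖ = 1 → 1 / ((k : ℝ) + 1) ≤ g n (μ j) W c a := by
  have hlt : 1 - 1 / ((k : ℝ) + 1) < 1 := by
    have : 0 < 1 / ((k : ℝ) + 1) := by positivity
    linarith
  choose N hN using fun j => exists_R (μ j) _ hlt
  set R : ℕ := Finset.univ.sup N
  have hR : ∀ j, 1 - 1 / ((k : ℝ) + 1) < (μ j).real (Metric.closedBall 0 (R : ℝ)) := fun j =>
    hN j R (Finset.le_sup (Finset.mem_univ j))
  choose W hW c hcR hc using fun n : ℕ => step hk hd μ hprob R (Nat.cast_nonneg _) hR n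
    (1 / ((k : ℝ) + 1) - 1 / ((n : ℝ) + 1)) (by
      have : 0 < 1 / ((n : ℝ) + 1) := by positivity
      linarith)
  have hcomp : IsCompact ({W : Fin k → EuclideanSpace ℝ (Fin d) | Orthonormal ℝ W} ×ˢ
      Metric.closedBall (0 : Fin k → ℝ) R) := by
    refine IsCompact.prod ?_ (isCompact_closedBall _ _)
    exact isCompact_unit.of_isClosed_subset isClosed_on (fun W hW => hW.1)
  obtain ⟨⟨W', c'⟩, hmem, s, hs, hlim⟩ := hcomp.tendsto_subseq (x := fun n => (W n, c n))
    (fun n => ⟨hW n, by simpa using hcR n⟩)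
  refine ⟨W', hmem.1, c', fun j n a ha => ?_⟩
  have h1 : Filter.Tendsto (fun i => g n (μ j) (W (s i)) (c (s i)) a) Filter.atTop
      (nhds (g n (μ j) W' c' a)) := by
    have hcont : Continuous (fun x : (Fin k → EuclideanSpace ℝ (Fin d)) × (Fin k → ℝ) =>
        g n (μ j) x.1 x.2 a) := by
      have h : Continuous (fun x : (Fin k → EuclideanSpace ℝ (Fin d)) × (Fin k → ℝ) => (x, a)) := by
        fun_prop
      exact Continuous.comp (g := fun x : ((Fin k → EuclideanSpace ℝ (Fin d)) × (Fin k → ℝ)) ×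
        (Fin k → ℝ) => g n (μ j) x.1.1 x.1.2 x.2) (f := fun x => (x, a)) (g_cont n (μ j)) h
    have h := hcont.tendsto (W', c')
    exact Filter.Tendsto.comp (g := fun x : (Fin k → EuclideanSpace ℝ (Fin d)) × (Fin k → ℝ) =>
        g n (μ j) x.1 x.2 a) (f := (fun n => (W n, c n)) ∘ s) h hlim
  have h2 : Filter.Tendsto (fun i => 1 / ((k : ℝ) + 1) - 1 / ((s i : ℕ) + 1 : ℝ)) Filter.atTop
      (nhds (1 / ((k : ℝ) + 1) - 0)) :=
    (tendsto_const_nhds).sub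
      ((tendsto_one_div_add_atTop_nhds_zero_nat (𝕜 := ℝ)).comp hs.tendsto_atTop)
  rw [sub_zero] at h2
  refine le_of_tendsto_of_tendsto h2 h1 ?_
  filter_upwards [hs.tendsto_atTop.eventually_ge_atTop n] with i hi
  exact (hc (s i) j a ha).trans (g_anti (s i) n hi (μ j) _ _ _)

theorem final {k m d : ℕ} (hk : 0 < k) (hd : m + k = d)
    (μ : Fin (m + 1) → Measure (EuclideanSpace ℝ (Fin d)))
    (hprob : ∀ i, IsProbabilityMeasure (μ i)) :
    ∃ W : Fin k → EuclideanSpace ℝ (Fin d), Orthonormal ℝ W ∧ ∃ c : Fin k → ℝ,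
      ∀ j (a : Fin k → ℝ), a ≠ 0 → 1 / ((k : ℝ≥0∞) + 1) ≤ μ j {y | 0 ≤ ∑ i, a i * (⟪W i, y⟫_ℝ - c i)} := by
  obtain ⟨W, hW, c, hc⟩ := limit hk hd μ hprob
  refine ⟨W, hW, c, fun j a ha => ?_⟩
  have key : ∀ a : Fin k → ℝ, ‖a‖ = 1 → 1 / ((k : ℝ) + 1) ≤
      (μ j).real {y | 0 ≤ ∑ i, a i * (⟪W i, y⟫_ℝ - c i)} := by
    intro a ha
    have hset : {y | 0 ≤ ∑ i, a i * (⟪W i, y⟫_ℝ - c i)} =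
        ⋂ n : ℕ, {y | 0 ≤ 1 + n * ∑ i, a i * (⟪W i, y⟫_ℝ - c i)} := by
      ext y
      simp only [Set.mem_ofPred_eq, Set.mem_iInter]
      constructor
      · intro h n
        positivity
      · intro h
        by_contra hneg
        push Not at hneg
        obtain ⟨n, hn⟩ := exists_nat_gt (1 / -(∑ i, a i * (⟪W i, y⟫_ℝ - c i)))
        rw [div_lt_iff₀ (by linarith)] at hn
        have := h n
        linarith
    have h1 : Filter.Tendsto (fun n : ℕ =>
        μ j {y | 0 ≤ 1 + n * ∑ i, a i * (⟪W i, y⟫_ℝ - c i)}) Filter.atTop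
        (nhds (μ j (⋂ n : ℕ, {y | 0 ≤ 1 + n * ∑ i, a i * (⟪W i, y⟫_ℝ - c i)}))) := by
      refine tendsto_measure_iInter_atTop (fun n => ?_) ?_ ⟨0, measure_ne_top _ _⟩
      · exact (isClosed_le continuous_const (by fun_prop)).measurableSet.nullMeasurableSet
      · intro n n' hn y hy
        simp only [Set.mem_ofPred_eq] at hy ⊢
        have hn' : (n : ℝ) ≤ n' := by exact_mod_cast hn
        rcases le_total 0 (∑ i, a i * (⟪W i, y⟫_ℝ - c i)) with h | h
        · positivity
        · have := mul_le_mul_of_nonpos_right hn' h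
          linarith
    rw [← hset] at h1
    have h2 := (ENNReal.tendsto_toReal (measure_ne_top (μ j) _)).comp h1
    exact ge_of_tendsto h2 (Filter.Eventually.of_forall fun n =>
      (hc j n a ha).trans (g_le n (μ j) W c a))
  have hna : 0 < ‖a‖ := norm_pos_iff.2 ha
  have h1 := key (‖a‖⁻¹ • a) (by rw [norm_smul, norm_inv, norm_norm, inv_mul_cancel₀ hna.ne'])
  have hset : {y | 0 ≤ ∑ i, (‖a‖⁻¹ • a) i * (⟪W i, y⟫_ℝ - c i)} =
      {y | 0 ≤ ∑ i, a i * (⟪W i, y⟫_ℝ - c i)} := by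
    ext y
    simp only [Set.mem_ofPred_eq, Pi.smul_apply, smul_eq_mul, mul_assoc, ← Finset.mul_sum]
    exact mul_nonneg_iff_of_pos_left (inv_pos.2 hna)
  rw [hset] at h1
  have h2 := ENNReal.ofReal_le_ofReal h1
  rw [measureReal_def, ENNReal.ofReal_toReal (measure_ne_top _ _)] at h2
  refine le_trans (le_of_eq ?_) h2
  rw [ENNReal.ofReal_div_of_pos (by positivity), ENNReal.ofReal_one,
    ENNReal.ofReal_add (by positivity) zero_le_one, ENNReal.ofReal_natCast, ENNReal.ofReal_one]

end CT

theorem central_transversal (d m : ℕ) (hm : m ≤ d)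
    (μ : Fin (m + 1) → Measure (EuclideanSpace ℝ (Fin d)))
    (hprob : ∀ i, IsProbabilityMeasure (μ i))
    (hac : ∀ i, μ i ≪ volume) :
    ∃ L : AffineSubspace ℝ (EuclideanSpace ℝ (Fin d)),
      (L : Set (EuclideanSpace ℝ (Fin d))).Nonempty ∧
      Module.finrank ℝ L.direction = m ∧
      ∀ (u : EuclideanSpace ℝ (Fin d)) (c : ℝ), ‖u‖ = 1 →
        (L : Set (EuclideanSpace ℝ (Fin d))) ⊆ {y | c ≤ ⟪y, u⟫_ℝ} →
        ∀ i, 1 / (((d - m : ℕ) : ℝ≥0∞) + 1) ≤ μ i {y | c ≤ ⟪y, u⟫_ℝ} := by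
  rcases Nat.eq_zero_or_pos (d - m) with h0 | hk
  · have hmd : m = d := by omega
    refine ⟨⊤, ⟨0, by simp⟩, by
      rw [AffineSubspace.direction_top, finrank_top, finrank_euclideanSpace_fin, hmd], ?_⟩
    intro u c hu hL
    exfalso
    have := hL (AffineSubspace.mem_top ℝ _ (-(|c| + 1) • u))
    simp only [Set.mem_ofPred_eq, inner_smul_left, real_inner_self_eq_norm_sq, hu] at this
    simp at this
    have := neg_abs_le c
    linarith
  · obtain ⟨W, hW, c, hc⟩ := CT.final hk (by omega : m + (d - m) = d) μ hprob
    set V := Submodule.span ℝ (Set.range W) with hV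
    have hy0 : ∀ i, ⟪W i, ∑ j, c j • W j⟫_ℝ = c i := fun i => hW.inner_right_fintype c i
    refine ⟨AffineSubspace.mk' (∑ i, c i • W i) Vᗮ, ⟨_, AffineSubspace.self_mem_mk' _ _⟩, ?_, ?_⟩
    · rw [AffineSubspace.direction_mk']
      have h1 := V.finrank_add_finrank_orthogonal
      have h2 : Module.finrank ℝ V = d - m := by
        rw [hV, finrank_span_eq_card hW.linearIndependent, Fintype.card_fin]
      rw [finrank_euclideanSpace_fin] at h1
      omega
    · intro u c' hu hL j
      have hmem : ∀ v ∈ Vᗮ, c' ≤ ⟪v + ∑ i, c i • W i, u⟫_ℝ := by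
        intro v hv
        apply hL
        change v + ∑ i, c i • W i ∈ AffineSubspace.mk' (∑ i, c i • W i) Vᗮ
        rw [AffineSubspace.mem_mk']
        simpa using hv
      have huV : u ∈ V := by
        rw [← Submodule.orthogonal_orthogonal V, Submodule.mem_orthogonal]
        intro v hv
        by_contra hne
        have := hmem (((c' - 1 - ⟪∑ i, c i • W i, u⟫_ℝ) / ⟪v, u⟫_ℝ) • v) (Vᗮ.smul_mem _ hv)
        rw [inner_add_left, inner_smul_left] at this
        simp only [conj_trivial] at this
        rw [div_mul_cancel₀ _ hne] at this
        linarith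
      obtain ⟨a, ha⟩ := (Submodule.mem_span_range_iff_exists_fun ℝ).1 huV
      have ha0 : a ≠ 0 := by
        rintro rfl
        rw [← ha] at hu
        simp at hu
      refine (hc j a ha0).trans (measure_mono ?_)
      intro y hy
      simp only [Set.mem_ofPred_eq] at hy ⊢
      have h1 := hmem 0 Vᗮ.zero_mem
      have e : ∀ z : EuclideanSpace ℝ (Fin d), ⟪z, u⟫_ℝ = ∑ i, a i * ⟪W i, z⟫_ℝ := by
        intro z
        rw [← ha, inner_sum]
        refine Finset.sum_congr rfl (fun i _ => ?_)
        rw [inner_smul_right, real_inner_comm]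
      rw [zero_add, e] at h1
      simp only [hy0] at h1
      rw [e]
      simp only [mul_sub, Finset.sum_sub_distrib] at hy
      linarith
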